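/- arXiv:math/0312232 — 2 statements merged into one kernel-verified Lean document; each statement's English description precedes it below -/
import Mathlib

section
/- Let 0 ≤ r1, r2 ≤ n and 0 ≤ s ≤ min(r1, n − r1, r2, n − r2). Then λ_s^{r1,r2}(r2; n) = (−1)^s · [r1]_s / [n − r1]_s. -/
/-- Falling factorial `z(z-1)⋯(z-k+1)` for complex `z`. -/
noncomputable def cfall (z : ℂ) (k : ℕ) : ℂ := ∏ i ∈ Finset.range k, (z - i)

/-- Generalized binomial coefficient `binom(t, j)` for complex `t`. -/
noncomputable def cbinom (t : ℂ) (j : ℕ) : ℂ := cfall t j / (Nat.factorial j)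

/-- The Hahn kernel `λ_s^{r1,r2}(t; n)`. -/
noncomputable def hahn (n r1 r2 s : ℕ) (t : ℂ) : ℂ :=
  ∑ j ∈ Finset.range (s + 1),
    (-1 : ℂ) ^ j * cbinom t j * cfall (s : ℂ) j * cfall ((n : ℂ) - s + 1) j /
      (cfall ((n : ℂ) - r1) j * cfall (r2 : ℂ) j)

theorem cfall_succ_right (z : ℂ) (k : ℕ) : cfall z (k+1) = cfall z k * (z - k) := by
  simp [cfall, Finset.prod_range_succ]

theorem cfall_succ_left (z : ℂ) (k : ℕ) : cfall z (k+1) = z * cfall (z - 1) k := by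
  simp only [cfall, Finset.prod_range_succ']
  rw [mul_comm]
  congr 1
  · simp
  · refine Finset.prod_congr rfl fun i _ => ?_
    push_cast; ring

theorem cfall_ne_zero (z : ℂ) (k : ℕ) (h : ∀ i < k, z ≠ i) : cfall z k ≠ 0 := by
  rw [cfall, Finset.prod_ne_zero_iff]
  intro i hi
  exact sub_ne_zero.mpr (h i (Finset.mem_range.mp hi))

theorem cfall_nat (m k : ℕ) : cfall (m : ℂ) k = (m.choose k : ℂ) * k.factorial := by
  have h : cfall (m : ℂ) k = (m.descFactorial k : ℂ) := by
    induction k with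
    | zero => simp [cfall]
    | succ k ih =>
      rw [cfall_succ_right, ih, Nat.descFactorial_succ]
      rcases le_or_gt k m with h | h
      · push_cast [Nat.cast_sub h]; ring
      · simp [Nat.descFactorial_eq_zero_iff_lt.mpr h]
  rw [h, Nat.descFactorial_eq_factorial_mul_choose]
  push_cast; ring

theorem chu (s : ℕ) : ∀ A B : ℂ, (∀ i < s, A ≠ (i : ℕ)) →
    ∑ j ∈ Finset.range (s+1), (s.choose j : ℂ) * ((-1) ^ j * (cfall B j / cfall A j))
      = cfall (A - B) s / cfall A s := by
  induction s with
  | zero => intro A B _; simp [cfall]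
  | succ s ih =>
    intro A B h
    have hA : A ≠ 0 := by simpa using h 0 (by omega)
    have h' : ∀ i < s, A - 1 ≠ (i : ℕ) := fun i hi e =>
      h (i+1) (by omega) (by push_cast; linear_combination e)
    have hs : A - s ≠ 0 := sub_ne_zero.mpr (h s (by omega))
    have n1 := cfall_ne_zero A s (fun i hi => h i (by omega))
    have n2 := cfall_ne_zero (A-1) s h'
    have e1 := ih A B (fun i hi => h i (by omega))
    have e2 := ih (A-1) (B-1) h'
    rw [Finset.sum_choose_succ_mul (fun j _ => (-1 : ℂ) ^ j * (cfall B j / cfall A j)) s]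
    have e3 : ∑ j ∈ Finset.range (s+1),
        (s.choose j : ℂ) * ((-1) ^ (j+1) * (cfall B (j+1) / cfall A (j+1)))
        = -(B / A) * (cfall (A - B) s / cfall (A-1) s) := by
      rw [show A - B = A - 1 - (B - 1) by ring, ← e2, Finset.mul_sum]
      refine Finset.sum_congr rfl fun j _ => ?_
      rw [cfall_succ_left, cfall_succ_left, mul_div_mul_comm]
      ring
    have e4 : A * cfall (A-1) s = cfall A s * (A - s) := by
      rw [← cfall_succ_left, cfall_succ_right]
    have e5 : -(B / A) * (cfall (A - B) s / cfall (A-1) s)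
        = -B * cfall (A-B) s / (cfall A s * (A - s)) := by
      rw [← e4]; field_simp
    rw [e1, e3, e5, cfall_succ_right, cfall_succ_right]
    field_simp
    ring

/-- For `0 ≤ r1, r2 ≤ n` and `0 ≤ s ≤ min(r1, n-r1, r2, n-r2)`,
`λ_s^{r1,r2}(r2; n) = (-1)^s [r1]_s / [n-r1]_s`. -/
theorem stmt_7 (n r1 r2 s : ℕ) (h1 : r1 ≤ n) (h2 : r2 ≤ n)
    (hs : s ≤ min (min r1 (n - r1)) (min r2 (n - r2))) :
    hahn n r1 r2 s (r2 : ℂ) = (-1 : ℂ) ^ s * cfall (r1 : ℂ) s / cfall ((n : ℂ) - r1) s := by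
  have hr1 : s ≤ r1 := by omega
  have hr2 : s ≤ r2 := by omega
  have hn1 : s ≤ n - r1 := by omega
  have hA : ∀ i < s, (n : ℂ) - r1 ≠ (i : ℕ) := by
    intro i hi e
    rw [← Nat.cast_sub h1] at e
    have := Nat.cast_injective e
    omega
  have key := chu s ((n : ℂ) - r1) ((n : ℂ) - s + 1) hA
  have e1 : cfall ((n : ℂ) - r1 - ((n : ℂ) - s + 1)) s = (-1) ^ s * cfall (r1 : ℂ) s := by
    unfold cfall
    rw [← Finset.prod_range_reflect]
    have : ((-1 : ℂ)) ^ s = ∏ i ∈ Finset.range s, (-1 : ℂ) := by simp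
    rw [this, ← Finset.prod_mul_distrib]
    refine Finset.prod_congr rfl fun i hi => ?_
    have hi := Finset.mem_range.mp hi
    have e : ((s - 1 - i : ℕ) : ℂ) = s - 1 - i := by
      rw [Nat.sub_sub, Nat.cast_sub (by omega)]; push_cast; ring
    rw [e]; ring
  rw [e1] at key
  rw [← key, hahn]
  refine Finset.sum_congr rfl fun j hj => ?_
  have hj := Finset.mem_range.mp hj
  have hr : cfall (r2 : ℂ) j ≠ 0 := cfall_ne_zero _ _ fun i hi e => by
    have := Nat.cast_injective e
    omega
  have hf : (j.factorial : ℂ) ≠ 0 := by exact_mod_cast j.factorial_ne_zero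
  have ha : cfall ((n : ℂ) - r1) j ≠ 0 := cfall_ne_zero _ _ fun i hi => hA i (by omega)
  rw [cbinom, cfall_nat s j]
  field_simp
end

section
/- Let 0 ≤ r1, r2 ≤ n and 0 ≤ s ≤ min(r1, n − r1, r2, n − r2). Then the following three operator identities hold: (1) Λ_s^{r1,r2} ∘ C^{n−r1} = (−1)^s ([r1]_s/[n−r1]_s) · Λ_s^{n−r1,r2} as maps (X_{n−r1} → ℂ) → (X_{r2} → ℂ); (2) C^{r2} ∘ Λ_s^{r1,r2} = (−1)^s ([n−r2]_s/[r2]_s) · Λ_s^{r1,n−r2} as maps (X_{r1} → ℂ) → (X_{n−r2} → ℂ); (3) the adjoint of Λ_s^{r1,r2} with respect to the standard inner products ⟨ψ, φ⟩ = Σ_x ψ(x)·conj(φ(x)) satisfies (Λ_s^{r1,r2})* = ([r1]_s [n−r2]_s / ([n−r1]_s [r2]_s)) · Λ_s^{r2,r1}. -/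
/-- The operator `Λ_s^{r1,r2} : (X_{r1} → ℂ) → (X_{r2} → ℂ)` with kernel
`λ_s^{r1,r2}(|x2 \ x1|; n)`. -/
noncomputable def Lam (Ω : Type*) [Fintype Ω] [DecidableEq Ω] (n r1 r2 s : ℕ)
    (ψ : {x : Finset Ω // x.card = r1} → ℂ) : {x : Finset Ω // x.card = r2} → ℂ :=
  fun x2 => ∑ x1 : {x : Finset Ω // x.card = r1},
    hahn n r1 r2 s ((((x2 : Finset Ω) \ (x1 : Finset Ω)).card : ℕ) : ℂ) * ψ x1

/-- The complement operator `C^r : (X_r → ℂ) → (X_{r'} → ℂ)`, `(C^r ψ)(y) = ψ(Ω \ y)`,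
where `r + r' = |Ω|`. -/
noncomputable def ComplOp {Ω : Type*} [Fintype Ω] [DecidableEq Ω] (r r' : ℕ)
    (h : r + r' = Fintype.card Ω) (ψ : {x : Finset Ω // x.card = r} → ℂ) :
    {x : Finset Ω // x.card = r'} → ℂ :=
  fun y => ψ ⟨(y : Finset Ω)ᶜ, by rw [Finset.card_compl, y.2]; omega⟩

lemma cfall_zero' (z : ℂ) : cfall z 0 = 1 := by simp [cfall]

lemma cfall_succ_r (z : ℂ) (k : ℕ) : cfall z (k + 1) = cfall z k * (z - k) := by
  simp [cfall, Finset.prod_range_succ]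

lemma cfall_add (z : ℂ) (k i : ℕ) : cfall z (k + i) = cfall z k * cfall (z - k) i := by
  unfold cfall
  rw [Finset.prod_range_add]
  congr 1
  apply Finset.prod_congr rfl
  intro x _
  push_cast
  ring

lemma cfall_succ_l (z : ℂ) (k : ℕ) : cfall z (k + 1) = z * cfall (z - 1) k := by
  rw [add_comm, cfall_add]
  simp [cfall]

lemma cfall_neg (z : ℂ) (m : ℕ) : cfall z m = (-1) ^ m * cfall (m - 1 - z) m := by
  induction m generalizing z with
  | zero => simp [cfall]
  | succ m ih =>
    rw [cfall_succ_r, ih, cfall_succ_l]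
    push_cast
    rw [show (m : ℂ) + 1 - 1 - z - 1 = m - 1 - z by ring]
    ring

lemma cfall_ne {z k : ℕ} (h : k ≤ z) : cfall (z : ℂ) k ≠ 0 := by
  unfold cfall
  rw [Finset.prod_ne_zero_iff]
  intro i hi
  rw [Finset.mem_range] at hi
  rw [sub_ne_zero]
  exact_mod_cast (by omega : z ≠ i)

lemma cfall_choose (s j : ℕ) : cfall (s : ℂ) j = (s.choose j : ℂ) * (j.factorial : ℂ) := by
  have h : cfall (s : ℂ) j = (s.descFactorial j : ℂ) := by
    rw [← descPochhammer_eval_eq_descFactorial, descPochhammer_eval_eq_prod_range]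
    rfl
  rw [h, Nat.descFactorial_eq_factorial_mul_choose]
  push_cast
  ring

/-- Chu-Vandermonde. -/
lemma vand (m : ℕ) (c d : ℂ) :
    ∑ i ∈ Finset.range (m + 1), (-1) ^ i * (m.choose i : ℂ) * cfall c i * cfall (d - i) (m - i)
      = cfall (d - c) m := by
  induction m generalizing c d with
  | zero => simp [cfall]
  | succ m ih =>
    have h1 : ∑ i ∈ Finset.range (m + 1 + 1), (-1) ^ i * (m.choose i : ℂ) * cfall c i *
        cfall (d - i) (m + 1 - i) = (d - m) * cfall (d - c) m := by
      rw [Finset.sum_range_succ, Nat.choose_succ_self, ← ih, Finset.mul_sum]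
      simp only [Nat.cast_zero, mul_zero, zero_mul, add_zero]
      apply Finset.sum_congr rfl
      intro i hi
      rw [Finset.mem_range] at hi
      obtain ⟨k, rfl⟩ : ∃ k, m = i + k := ⟨m - i, by omega⟩
      rw [show i + k + 1 - i = k + 1 by omega, show i + k - i = k by omega, cfall_succ_r]
      push_cast
      ring
    have h2 : ∑ i ∈ Finset.range (m + 1), (-1) ^ (i + 1) * (m.choose i : ℂ) * cfall c (i + 1) *
        cfall (d - (i + 1 : ℕ)) (m + 1 - (i + 1)) = - c * cfall (d - c) m := by
      have := ih (c - 1) (d - 1)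
      rw [show d - 1 - (c - 1) = d - c by ring] at this
      rw [← this, Finset.mul_sum]
      apply Finset.sum_congr rfl
      intro i hi
      rw [cfall_succ_l, Nat.add_sub_add_right]
      push_cast
      rw [show d - ((i : ℂ) + 1) = d - 1 - i by ring]
      ring
    rw [cfall_succ_r, show cfall (d - c) m * (d - c - m)
      = (d - m) * cfall (d - c) m + - c * cfall (d - c) m by ring, ← h1, ← h2]
    rw [Finset.sum_range_succ', Finset.sum_range_succ' _ (m + 1)]
    rw [add_right_comm, ← Finset.sum_add_distrib]
    congr 1
    · apply Finset.sum_congr rfl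
      intro i hi
      rw [Nat.choose_succ_succ]
      push_cast
      ring
    · simp

noncomputable def KK (N : ℂ) (s : ℕ) (a b t : ℂ) : ℂ :=
  ∑ j ∈ Finset.range (s + 1),
    (-1 : ℂ) ^ j * (s.choose j : ℂ) * cfall t j * cfall N j / (cfall a j * cfall b j)

lemma KK_comm (N : ℂ) (s : ℕ) (a b t : ℂ) : KK N s a b t = KK N s b a t := by
  unfold KK
  simp only [mul_comm (cfall a _)]

lemma hahn_eq (n r1 r2 s : ℕ) (t : ℂ) :
    hahn n r1 r2 s t = KK (n - s + 1) s (n - r1) r2 t := by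
  unfold hahn KK cbinom
  apply Finset.sum_congr rfl
  intro j _
  rw [cfall_choose s j]
  have : (j.factorial : ℂ) ≠ 0 := by exact_mod_cast j.factorial_ne_zero
  congr 1
  field_simp

lemma cfall_split_ne {z : ℂ} {s k : ℕ} (h : cfall z s ≠ 0) (hk : k ≤ s) : cfall z k ≠ 0 := by
  obtain ⟨i, rfl⟩ := Nat.exists_eq_add_of_le hk
  rw [cfall_add] at h
  exact left_ne_zero_of_mul h

lemma KK_refl (n : ℂ) (s : ℕ) (a b t : ℂ) (ha : cfall a s ≠ 0) (hb : cfall b s ≠ 0)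
    (hna : cfall (n - a) s ≠ 0) :
    KK (n - s + 1) s a b (b - t) =
      (-1) ^ s * (cfall (n - a) s / cfall a s) * KK (n - s + 1) s (n - a) b t := by
  set N := n - s + 1 with hN
  obtain ⟨F, hF⟩ : ∃ F : ℕ → ℕ → ℂ, F = (fun k i : ℕ => (-1 : ℂ) ^ (k + i) * (s.choose (k + i) : ℂ) *
        ((-1) ^ k * ((k + i).choose k : ℂ) * cfall t k * cfall (b - k) i) * cfall N (k + i) /
        (cfall a (k + i) * cfall b (k + i))) := ⟨_, rfl⟩
  have e1 : KK N s a b (b - t) = ∑ j ∈ Finset.range (s + 1), ∑ k ∈ Finset.range (j + 1),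
      F k (j - k) := by
    unfold KK
    apply Finset.sum_congr rfl
    intro j _
    rw [← vand j t b, Finset.mul_sum, Finset.sum_mul, Finset.sum_div]
    apply Finset.sum_congr rfl
    intro k hk
    rw [Finset.mem_range] at hk
    simp only [hF, show k + (j - k) = j by omega]
  rw [e1, Finset.sum_range_diag_flip, hF]
  unfold KK
  rw [Finset.mul_sum]
  apply Finset.sum_congr rfl
  intro k hk
  rw [Finset.mem_range] at hk
  obtain ⟨m, rfl⟩ : ∃ m, s = k + m := ⟨s - k, by omega⟩
  have hv := vand m (N - k) (a - k)
  rw [show a - (k : ℂ) - (N - k) = a - N by ring, cfall_neg,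
    show (m : ℂ) - 1 - (a - N) = n - a - k by rw [hN]; push_cast; ring] at hv
  have hak := cfall_split_ne ha (Nat.le_add_right k m)
  have hbk := cfall_split_ne hb (Nat.le_add_right k m)
  have hnak := cfall_split_ne hna (Nat.le_add_right k m)
  have e2 : (-1 : ℂ) ^ (k + m) * (cfall (n - a) (k + m) / cfall a (k + m)) *
      ((-1) ^ k * ((k + m).choose k : ℂ) * cfall t k * cfall N k / (cfall (n - a) k * cfall b k))
      = (((k + m).choose k : ℂ) * cfall t k * cfall N k / (cfall b k * cfall a (k + m))) *
        ((-1) ^ m * cfall (n - a - k) m) := by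
    rw [cfall_add (n - a), pow_add]
    have : (-1 : ℂ) ^ k * (-1) ^ k = 1 := by rw [← mul_pow]; simp
    field_simp
    linear_combination ((k + m).choose k : ℂ) * cfall t k * cfall N k *
       cfall (n - a - k) m * this
  rw [e2, ← hv, Finset.mul_sum, show k + m + 1 - k = m + 1 by omega]
  apply Finset.sum_congr rfl
  intro i hi
  rw [Finset.mem_range] at hi
  obtain ⟨l, rfl⟩ : ∃ l, m = i + l := ⟨m - i, by omega⟩
  have hch : (((k + (i + l)).choose (k + i) : ℂ)) * ((k + i).choose k : ℂ) =
      ((k + (i + l)).choose k : ℂ) * ((i + l).choose i : ℂ) := by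
    have := Nat.choose_mul (n := k + (i + l)) (k := k + i) (s := k) (by omega)
    rw [show k + (i + l) - k = i + l by omega, show k + i - k = i by omega] at this
    exact_mod_cast this
  have hbi := cfall_split_ne hb (show k + i ≤ k + (i + l) by omega)
  have hai := cfall_split_ne ha (show k + i ≤ k + (i + l) by omega)
  have hsplit : cfall a (k + (i + l)) = cfall a (k + i) * cfall (a - k - i) l := by
    rw [← add_assoc, cfall_add a (k + i)]
    push_cast
    rw [sub_sub]
  rw [hsplit] at ha
  have hal := right_ne_zero_of_mul ha
  rw [cfall_add] at hbi
  have hbi2 := right_ne_zero_of_mul hbi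
  beta_reduce
  rw [hsplit, show i + l - i = l by omega, cfall_add b, cfall_add N]
  have : (-1 : ℂ) ^ k * (-1) ^ k = 1 := by rw [← mul_pow]; simp
  rw [pow_add]
  rw [div_mul_eq_mul_div, div_eq_div_iff (mul_ne_zero hai hbi) (mul_ne_zero hbk ha)]
  calc _ = ((-1 : ℂ) ^ k * (-1) ^ k) * ((((k + (i + l)).choose (k + i) : ℂ)) *
        ((k + i).choose k : ℂ)) * ((-1) ^ i * cfall t k * cfall (b - k) i * cfall N k *
        cfall (N - k) i * cfall b k * cfall a (k + i) * cfall (a - k - i) l) := by ring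
    _ = _ := by rw [this, hch]; ring

lemma hahn_one {n r1 r2 s : ℕ} (h1 : r1 ≤ n) 
    (hs1 : s ≤ r1) (hs2 : s ≤ n - r1) (hs3 : s ≤ r2) (t : ℂ) :
    hahn n r1 r2 s (r2 - t) =
      (-1) ^ s * (cfall (r1 : ℂ) s / cfall ((n : ℂ) - r1) s) * hahn n (n - r1) r2 s t := by
  rw [hahn_eq, hahn_eq, KK_refl]
  · push_cast [h1]
    simp only [sub_sub_cancel]
  · have := cfall_ne hs2
    push_cast [h1] at this
    exact this
  · exact cfall_ne hs3
  · rw [sub_sub_cancel]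
    exact cfall_ne hs1

lemma hahn_comm {n r1 r2 : ℕ} (s : ℕ) (h1 : r1 ≤ n) (h2 : r2 ≤ n) (t : ℂ) :
    hahn n r1 r2 s t = hahn n (n - r2) (n - r1) s t := by
  rw [hahn_eq, hahn_eq, KK_comm]
  push_cast [h1, h2]
  simp only [sub_sub_cancel]

lemma hahn_two {n r1 r2 s : ℕ} (h1 : r1 ≤ n) (h2 : r2 ≤ n)
    (hs2 : s ≤ n - r1) (hs3 : s ≤ r2) (hs4 : s ≤ n - r2) (t : ℂ) :
    hahn n r1 r2 s (n - r1 - t) =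
      (-1) ^ s * (cfall ((n : ℂ) - r2) s / cfall (r2 : ℂ) s) * hahn n r1 (n - r2) s t := by
  have := hahn_one (n := n) (r1 := n - r2) (r2 := n - r1) (s := s) (Nat.sub_le _ _) hs4
    (by omega) hs2 t
  rw [hahn_comm s h1 h2, hahn_comm s h1 (Nat.sub_le _ _)]
  push_cast [h1, h2] at this
  simpa only [sub_sub_cancel] using this

lemma hahn_three {n r1 r2 s : ℕ} (h1 : r1 ≤ n) (h2 : r2 ≤ n)
    (hs1 : s ≤ r1) (hs2 : s ≤ n - r1) (hs3 : s ≤ r2) (hs4 : s ≤ n - r2) (u : ℂ) :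
    hahn n r1 r2 s (r2 - u) =
      (cfall (r1 : ℂ) s * cfall ((n : ℂ) - r2) s / (cfall ((n : ℂ) - r1) s * cfall (r2 : ℂ) s)) *
       hahn n r2 r1 s (r1 - u) := by
  have hA := hahn_one h1 hs1 hs2 hs3 u
  have hB := hahn_one (r1 := r2) (r2 := r1) h2 hs3 hs4 hs1 u
  have e : hahn n (n - r1) r2 s u = hahn n (n - r2) r1 s u := by
    rw [hahn_comm s (Nat.sub_le _ _) h2, Nat.sub_sub_self h1]
  rw [hA, hB, e]
  have n1 := cfall_ne hs3
  have n2 := cfall_ne hs4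
  have n3 := cfall_ne hs2
  push_cast [h1, h2] at n2 n3
  field_simp

lemma cfall_conj (z : ℂ) (k : ℕ) : (starRingEnd ℂ) (cfall z k) = cfall ((starRingEnd ℂ) z) k := by
  simp [cfall, map_prod]

lemma hahn_conj (n r1 r2 s t : ℕ) : (starRingEnd ℂ) (hahn n r1 r2 s t) = hahn n r1 r2 s t := by
  simp [hahn, cbinom, cfall_conj, map_sum]

/-- The three operator identities of Proposition 1:
`Λ_s^{r1,r2} ∘ C^{n-r1} = (-1)^s ([r1]_s/[n-r1]_s) Λ_s^{n-r1,r2}`,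
`C^{r2} ∘ Λ_s^{r1,r2} = (-1)^s ([n-r2]_s/[r2]_s) Λ_s^{r1,n-r2}`, and
`(Λ_s^{r1,r2})* = ([r1]_s [n-r2]_s/([n-r1]_s [r2]_s)) Λ_s^{r2,r1}` (in the form
`⟨Λ_s^{r1,r2} ψ, φ⟩ = ⟨ψ, c Λ_s^{r2,r1} φ⟩` for the standard inner products). -/
theorem stmt_8 {Ω : Type*} [Fintype Ω] [DecidableEq Ω] (n r1 r2 s : ℕ)
    (hn : Fintype.card Ω = n) (h1 : r1 ≤ n) (h2 : r2 ≤ n)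
    (hs : s ≤ min (min r1 (n - r1)) (min r2 (n - r2)))
    (hc1 : n - r1 + r1 = Fintype.card Ω) (hc2 : r2 + (n - r2) = Fintype.card Ω) :
    (∀ ψ : {x : Finset Ω // x.card = n - r1} → ℂ,
      Lam Ω n r1 r2 s (ComplOp (n - r1) r1 hc1 ψ) =
        ((-1 : ℂ) ^ s * (cfall (r1 : ℂ) s / cfall ((n : ℂ) - r1) s)) •
          Lam Ω n (n - r1) r2 s ψ) ∧
    (∀ ψ : {x : Finset Ω // x.card = r1} → ℂ,
      ComplOp r2 (n - r2) hc2 (Lam Ω n r1 r2 s ψ) =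
        ((-1 : ℂ) ^ s * (cfall ((n : ℂ) - r2) s / cfall (r2 : ℂ) s)) •
          Lam Ω n r1 (n - r2) s ψ) ∧
    (∀ (ψ : {x : Finset Ω // x.card = r1} → ℂ) (φ : {x : Finset Ω // x.card = r2} → ℂ),
      ∑ x2 : {x : Finset Ω // x.card = r2},
          Lam Ω n r1 r2 s ψ x2 * (starRingEnd ℂ) (φ x2) =
        ∑ x1 : {x : Finset Ω // x.card = r1},
          ψ x1 * (starRingEnd ℂ)
            ((cfall (r1 : ℂ) s * cfall ((n : ℂ) - r2) s /
                (cfall ((n : ℂ) - r1) s * cfall (r2 : ℂ) s)) *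
              Lam Ω n r2 r1 s φ x1)) := by
  subst hn
  simp only [le_min_iff] at hs
  obtain ⟨⟨hs1, hs2⟩, hs3, hs4⟩ := hs
  refine ⟨?_, ?_, ?_⟩
  · intro ψ
    funext x2
    simp only [Lam, ComplOp, Pi.smul_apply, smul_eq_mul]
    rw [Finset.mul_sum]
    refine Fintype.sum_bijective
      (fun x : {x : Finset Ω // x.card = r1} =>
        (⟨(x : Finset Ω)ᶜ, by rw [Finset.card_compl, x.2]⟩ :
          {x : Finset Ω // x.card = Fintype.card Ω - r1})) ?_ _ _ ?_
    · constructor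
      · intro x y h
        simpa [Subtype.ext_iff] using h
      · intro y
        refine ⟨⟨(y : Finset Ω)ᶜ, by rw [Finset.card_compl, y.2]; omega⟩, ?_⟩
        simp
    · intro x1
      rw [← mul_assoc, ← hahn_one h1 hs1 hs2 hs3]
      congr 2
      have h := Finset.card_sdiff_add_card_inter (x2 : Finset Ω) (x1 : Finset Ω)
      rw [x2.2] at h
      have h' := congrArg (Nat.cast : ℕ → ℂ) h
      push_cast at h'
      have e : (x2 : Finset Ω) \ (x1 : Finset Ω)ᶜ = (x2 : Finset Ω) ∩ (x1 : Finset Ω) := by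
        ext a; simp
      rw [e]
      linear_combination h'
  · intro ψ
    funext x2
    simp only [Lam, ComplOp, Pi.smul_apply, smul_eq_mul]
    rw [Finset.mul_sum]
    apply Finset.sum_congr rfl
    intro x1 _
    rw [← mul_assoc, ← hahn_two h1 h2 hs2 hs3 hs4]
    congr 2
    have h := Finset.card_sdiff_add_card_inter ((x1 : Finset Ω)ᶜ) (x2 : Finset Ω)
    rw [Finset.card_compl, x1.2] at h
    have e1 : (x1 : Finset Ω)ᶜ \ x2 = (x2 : Finset Ω)ᶜ \ x1 := by
      ext a; simp [and_comm]
    have e2 : (x1 : Finset Ω)ᶜ ∩ x2 = (x2 : Finset Ω) \ x1 := by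
      ext a; simp [and_comm]
    rw [e1, e2] at h
    rw [← Nat.cast_sub h1, ← h]
    push_cast
    ring
  · intro ψ φ
    simp only [Lam, Finset.sum_mul, Finset.mul_sum, map_sum]
    rw [Finset.sum_comm]
    apply Finset.sum_congr rfl
    intro x1 _
    apply Finset.sum_congr rfl
    intro x2 _
    have ha := Finset.card_sdiff_add_card_inter (x2 : Finset Ω) (x1 : Finset Ω)
    have hb := Finset.card_sdiff_add_card_inter (x1 : Finset Ω) (x2 : Finset Ω)
    rw [x2.2] at ha
    rw [x1.2, Finset.inter_comm] at hb
    have ha' : ((((x2 : Finset Ω) \ (x1 : Finset Ω)).card : ℕ) : ℂ) =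
        r2 - (((x2 : Finset Ω) ∩ (x1 : Finset Ω)).card : ℕ) := by
      have h' := congrArg (Nat.cast : ℕ → ℂ) ha; push_cast at h'; linear_combination h'
    have hb' : ((((x1 : Finset Ω) \ (x2 : Finset Ω)).card : ℕ) : ℂ) =
        r1 - (((x2 : Finset Ω) ∩ (x1 : Finset Ω)).card : ℕ) := by
      have h' := congrArg (Nat.cast : ℕ → ℂ) hb; push_cast at h'; linear_combination h'
    have key := hahn_three h1 h2 hs1 hs2 hs3 hs4
      ((((x2 : Finset Ω) ∩ (x1 : Finset Ω)).card : ℕ) : ℂ)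
    rw [← ha', ← hb'] at key
    rw [← mul_assoc, ← key, map_mul, hahn_conj]
    ring
end
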